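/- Let F(x,y) = r·φ(u,s,v,t) be a general spherically symmetric metric on a domain of ℝⁿ. At any point (x,y) with y ≠ 0 where φ is smooth, the angular metric h_{ij} := g_{ij} − (∂F/∂y^i)(∂F/∂y^j) is given by h_{ij} = σ₁φ(δ_{ij} − r_i r_j) + φφ_ss s_i s_j + φφ_tt t_i t_j + φφ_st (s_i t_j + s_j t_i), where σ₁ := φ − sφ_s − tφ_t. -/

import Mathlib

/-! The restriction of `F` to fixed `x` satisfies `F_j = φ r_j + φ_s s_j + φ_t t_j`, because
`∂r/∂y^j = r_j`, `∂s/∂y^j = s_j / r` and `∂t/∂y^j = t_j / r` (`hasPD_Fm`). Since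
`½ (F²)_{ij} = F_i F_j + F F_{ij}`, the angular metric equals `F F_{ij}`, and `F_{ij}` follows by
differentiating the formula for `F_j` once more, using
`∂r_j/∂y^i = (δ_{ij} - r_i r_j) / r` (`hasPD_unit`) and the symmetry `φ_{st} = φ_{ts}`
(`Smooth4.pds_pdt`). -/

noncomputable section

open scoped BigOperators

namespace GSSFinsler

/-- `k`-th standard basis vector of `ℝⁿ`. -/
def bvec (n : ℕ) (k : Fin n) : Fin n → ℝ := Pi.single k 1

/-- Standard inner product on `ℝⁿ`. -/
def ip {n : ℕ} (x y : Fin n → ℝ) : ℝ := ∑ i, x i * y i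

/-- Euclidean norm on `ℝⁿ`. -/
def nrm {n : ℕ} (y : Fin n → ℝ) : ℝ := Real.sqrt (ip y y)

/-! Partial derivative operators on a smooth function of four real variables
`φ = φ(u, s, v, t)`. -/

def pdu (f : ℝ → ℝ → ℝ → ℝ → ℝ) (u s v t : ℝ) : ℝ := deriv (fun z => f z s v t) u
def pds (f : ℝ → ℝ → ℝ → ℝ → ℝ) (u s v t : ℝ) : ℝ := deriv (fun z => f u z v t) s
def pdv (f : ℝ → ℝ → ℝ → ℝ → ℝ) (u s v t : ℝ) : ℝ := deriv (fun z => f u s z t) v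
def pdt (f : ℝ → ℝ → ℝ → ℝ → ℝ) (u s v t : ℝ) : ℝ := deriv (fun z => f u s v z) t

/-- `u := |x|²`. -/
def uu {n : ℕ} (x : Fin n → ℝ) : ℝ := ip x x
/-- `s := ⟨x,y⟩/|y|`. -/
def sc {n : ℕ} (x y : Fin n → ℝ) : ℝ := ip x y / nrm y
/-- `v := ⟨a,x⟩`. -/
def vc {n : ℕ} (a x : Fin n → ℝ) : ℝ := ip a x
/-- `t := ⟨a,y⟩/|y|`. -/
def tc {n : ℕ} (a y : Fin n → ℝ) : ℝ := ip a y / nrm y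

/-- Evaluation of a function of `(u,s,v,t)` at the point determined by `(a,x,y)`. -/
def ev {n : ℕ} (f : ℝ → ℝ → ℝ → ℝ → ℝ) (a x y : Fin n → ℝ) : ℝ :=
  f (uu x) (sc x y) (vc a x) (tc a y)

/-- The general spherically symmetric metric `F(x,y) = |y| φ(u,s,v,t)`. -/
def Fm {n : ℕ} (φ : ℝ → ℝ → ℝ → ℝ → ℝ) (a x y : Fin n → ℝ) : ℝ :=
  nrm y * φ (uu x) (sc x y) (vc a x) (tc a y)

/-- Fundamental tensor `g_{ij} := ½ ∂²(F²)/∂y^i∂y^j`. -/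
def gm {n : ℕ} (φ : ℝ → ℝ → ℝ → ℝ → ℝ) (a x y : Fin n → ℝ) (i j : Fin n) : ℝ :=
  (1/2) * fderiv ℝ (fun z => fderiv ℝ (fun w => (Fm φ a x w)^2) z (bvec n j)) y (bvec n i)

/-- Cartan tensor `C_{ijk} := ½ ∂g_{ij}/∂y^k`. -/
def cart {n : ℕ} (φ : ℝ → ℝ → ℝ → ℝ → ℝ) (a x y : Fin n → ℝ) (i j k : Fin n) : ℝ :=
  (1/2) * fderiv ℝ (fun z => gm φ a x z i j) y (bvec n k)

/-- Angular metric `h_{ij} := g_{ij} − F_{y^i}F_{y^j}`. -/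
def ang {n : ℕ} (φ : ℝ → ℝ → ℝ → ℝ → ℝ) (a x y : Fin n → ℝ) (i j : Fin n) : ℝ :=
  gm φ a x y i j -
    fderiv ℝ (fun w => Fm φ a x w) y (bvec n i) *
      fderiv ℝ (fun w => Fm φ a x w) y (bvec n j)

/-- The fundamental tensor as a matrix. -/
def gMat {n : ℕ} (φ : ℝ → ℝ → ℝ → ℝ → ℝ) (a x y : Fin n → ℝ) :
    Matrix (Fin n) (Fin n) ℝ :=
  Matrix.of fun i j => gm φ a x y i j

/-- The inverse fundamental tensor `g^{ij}`. -/
def gInv {n : ℕ} (φ : ℝ → ℝ → ℝ → ℝ → ℝ) (a x y : Fin n → ℝ) :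
    Matrix (Fin n) (Fin n) ℝ :=
  (gMat φ a x y)⁻¹

/-- Mean Cartan torsion `I_k := g^{jl} C_{jlk}`. -/
def mci {n : ℕ} (φ : ℝ → ℝ → ℝ → ℝ → ℝ) (a x y : Fin n → ℝ) (k : Fin n) : ℝ :=
  ∑ j, ∑ l, gInv φ a x y j l * cart φ a x y j l k

/-- Squared norm `‖I‖² := g^{ij} I_i I_j` of the mean Cartan torsion. -/
def normI2 {n : ℕ} (φ : ℝ → ℝ → ℝ → ℝ → ℝ) (a x y : Fin n → ℝ) : ℝ :=
  ∑ i, ∑ j, gInv φ a x y i j * mci φ a x y i * mci φ a x y j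

/-- `s_i := x_i − s·y_i/r`. -/
def sv {n : ℕ} (x y : Fin n → ℝ) (i : Fin n) : ℝ := x i - sc x y * (y i / nrm y)
/-- `t_i := a_i − t·y_i/r`. -/
def tv {n : ℕ} (a y : Fin n → ℝ) (i : Fin n) : ℝ := a i - tc a y * (y i / nrm y)

/-- `‖𝔖‖² := g^{ij}s_is_j`. -/
def nS2 {n : ℕ} (φ : ℝ → ℝ → ℝ → ℝ → ℝ) (a x y : Fin n → ℝ) : ℝ :=
  ∑ i, ∑ j, gInv φ a x y i j * sv x y i * sv x y j
/-- `‖ℜ‖² := g^{ij}s_it_j`. -/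
def nR2 {n : ℕ} (φ : ℝ → ℝ → ℝ → ℝ → ℝ) (a x y : Fin n → ℝ) : ℝ :=
  ∑ i, ∑ j, gInv φ a x y i j * sv x y i * tv a y j
/-- `‖𝔗‖² := g^{ij}t_it_j`. -/
def nT2 {n : ℕ} (φ : ℝ → ℝ → ℝ → ℝ → ℝ) (a x y : Fin n → ℝ) : ℝ :=
  ∑ i, ∑ j, gInv φ a x y i j * tv a y i * tv a y j

/-! The scalars `σ₁, …, σ₁₁` as functions of `(u,s,v,t)`.  Subscripts on `φ`
denote partial derivatives; `φ_{st}` is `pdt (pds φ)` (first `s`, then `t`),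
`φ_{ts}` is `pds (pdt φ)`, etc. -/

def sig1 (φ : ℝ → ℝ → ℝ → ℝ → ℝ) (u s v t : ℝ) : ℝ :=
  φ u s v t - s * pds φ u s v t - t * pdt φ u s v t

def sig2 (φ : ℝ → ℝ → ℝ → ℝ → ℝ) (u s v t : ℝ) : ℝ :=
  sig1 φ u s v t * pds φ u s v t - s * φ u s v t * pds (pds φ) u s v t -
    t * φ u s v t * pds (pdt φ) u s v t

def sig3 (φ : ℝ → ℝ → ℝ → ℝ → ℝ) (u s v t : ℝ) : ℝ :=
  sig1 φ u s v t * pdt φ u s v t - s * φ u s v t * pdt (pds φ) u s v t -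
    t * φ u s v t * pdt (pdt φ) u s v t

def sig4 (φ : ℝ → ℝ → ℝ → ℝ → ℝ) (u s v t : ℝ) : ℝ :=
  3 * pds φ u s v t * pds (pds φ) u s v t + φ u s v t * pds (pds (pds φ)) u s v t

def sig5 (φ : ℝ → ℝ → ℝ → ℝ → ℝ) (u s v t : ℝ) : ℝ :=
  3 * pdt φ u s v t * pdt (pdt φ) u s v t + φ u s v t * pdt (pdt (pdt φ)) u s v t

def sig6 (φ : ℝ → ℝ → ℝ → ℝ → ℝ) (u s v t : ℝ) : ℝ :=
  2 * pds φ u s v t * pdt (pds φ) u s v t + pdt φ u s v t * pds (pds φ) u s v t +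
    φ u s v t * pdt (pds (pds φ)) u s v t

def sig7 (φ : ℝ → ℝ → ℝ → ℝ → ℝ) (u s v t : ℝ) : ℝ :=
  2 * pdt φ u s v t * pds (pdt φ) u s v t + pds φ u s v t * pdt (pdt φ) u s v t +
    φ u s v t * pds (pdt (pdt φ)) u s v t

def sig8 (φ : ℝ → ℝ → ℝ → ℝ → ℝ) (u s v t : ℝ) : ℝ :=
  φ u s v t * (sig1 φ u s v t * sig4 φ u s v t - 3 * sig2 φ u s v t * pds (pds φ) u s v t)

def sig9 (φ : ℝ → ℝ → ℝ → ℝ → ℝ) (u s v t : ℝ) : ℝ :=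
  φ u s v t * (sig1 φ u s v t * sig5 φ u s v t - 3 * sig3 φ u s v t * pdt (pdt φ) u s v t)

def sig10 (φ : ℝ → ℝ → ℝ → ℝ → ℝ) (u s v t : ℝ) : ℝ :=
  φ u s v t * (sig1 φ u s v t * sig6 φ u s v t - 2 * sig2 φ u s v t * pdt (pds φ) u s v t -
    sig3 φ u s v t * pds (pds φ) u s v t)

def sig11 (φ : ℝ → ℝ → ℝ → ℝ → ℝ) (u s v t : ℝ) : ℝ :=
  φ u s v t * (sig1 φ u s v t * sig7 φ u s v t - 2 * sig3 φ u s v t * pds (pdt φ) u s v t -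
    sig2 φ u s v t * pdt (pdt φ) u s v t)

/-- The scalar `H` of Lemma 3.2. -/
def Hc {n : ℕ} (φ : ℝ → ℝ → ℝ → ℝ → ℝ) (a x y : Fin n → ℝ) : ℝ :=
  ((n : ℝ) + 1) * (ev (pds φ) a x y / ev φ a x y +
      ev (pds (sig1 φ)) a x y / ev (sig1 φ) a x y) +
  nS2 φ a x y * (ev (pds (pds (pds φ))) a x y -
      3 * ev (pds (sig1 φ)) a x y * ev (pds (pds φ)) a x y / ev (sig1 φ) a x y) * ev φ a x y +
  2 * nR2 φ a x y * (ev (pdt (pds (pds φ))) a x y -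
      (2 * ev (pds (sig1 φ)) a x y * ev (pdt (pds φ)) a x y +
        ev (pdt (sig1 φ)) a x y * ev (pds (pds φ)) a x y) / ev (sig1 φ) a x y) * ev φ a x y +
  nT2 φ a x y * (ev (pds (pdt (pdt φ))) a x y -
      (2 * ev (pdt (sig1 φ)) a x y * ev (pds (pdt φ)) a x y +
        ev (pds (sig1 φ)) a x y * ev (pdt (pdt φ)) a x y) / ev (sig1 φ) a x y) * ev φ a x y

/-- The scalar `K` of Lemma 3.2. -/
def Kc {n : ℕ} (φ : ℝ → ℝ → ℝ → ℝ → ℝ) (a x y : Fin n → ℝ) : ℝ :=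
  ((n : ℝ) + 1) * (ev (pdt φ) a x y / ev φ a x y +
      ev (pdt (sig1 φ)) a x y / ev (sig1 φ) a x y) +
  nT2 φ a x y * (ev (pdt (pdt (pdt φ))) a x y -
      3 * ev (pdt (sig1 φ)) a x y * ev (pdt (pdt φ)) a x y / ev (sig1 φ) a x y) * ev φ a x y +
  nS2 φ a x y * (ev (pdt (pds (pds φ))) a x y -
      (2 * ev (pds (sig1 φ)) a x y * ev (pdt (pds φ)) a x y +
        ev (pdt (sig1 φ)) a x y * ev (pds (pds φ)) a x y) / ev (sig1 φ) a x y) * ev φ a x y +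
  2 * nR2 φ a x y * (ev (pds (pdt (pdt φ))) a x y -
      (2 * ev (pdt (sig1 φ)) a x y * ev (pds (pdt φ)) a x y +
        ev (pds (sig1 φ)) a x y * ev (pdt (pdt φ)) a x y) / ev (sig1 φ) a x y) * ev φ a x y

/-- The scalar `M` appearing in the proof of Theorem 1.1. -/
def Mc {n : ℕ} (φ : ℝ → ℝ → ℝ → ℝ → ℝ) (a x y : Fin n → ℝ) : ℝ :=
  ev (sig2 φ) a x y * (ev (sig1 φ) a x y * ((n : ℝ) - 2) * ev φ a x y +
      (ip a a - tc a y ^ 2) * ev φ a x y * ev (pdt (pdt φ)) a x y +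
      (vc a x - sc x y * tc a y) * ev φ a x y * ev (pdt (pds φ)) a x y) -
  ev (sig3 φ) a x y * ((vc a x - sc x y * tc a y) * ev φ a x y * ev (pds (pds φ)) a x y +
      (ip a a - tc a y ^ 2) * ev φ a x y * ev (pdt (pds φ)) a x y) +
  ev (sig10 φ) a x y * (vc a x - sc x y * tc a y) -
  ev (sig11 φ) a x y * (ip a a - tc a y ^ 2)

/-- The scalar `N` appearing in the proof of Theorem 1.1. -/
def Nc {n : ℕ} (φ : ℝ → ℝ → ℝ → ℝ → ℝ) (a x y : Fin n → ℝ) : ℝ :=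
  ev (sig2 φ) a x y * ((vc a x - sc x y * tc a y) * ev φ a x y * ev (pdt (pdt φ)) a x y +
      (uu x - sc x y ^ 2) * ev φ a x y * ev (pdt (pds φ)) a x y) -
  ev (sig3 φ) a x y * (ev (sig1 φ) a x y * ((n : ℝ) - 2) * ev φ a x y +
      (uu x - sc x y ^ 2) * ev φ a x y * ev (pds (pds φ)) a x y +
      (vc a x - sc x y * tc a y) * ev φ a x y * ev (pdt (pds φ)) a x y) +
  ev (sig10 φ) a x y * (uu x - sc x y ^ 2) -
  ev (sig11 φ) a x y * (vc a x - sc x y * tc a y)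

end GSSFinsler

namespace GSSFinsler

/-! ### Smooth functions of four variables -/

/-- Smoothness of a curried function of four real variables. -/
def Smooth4 (f : ℝ → ℝ → ℝ → ℝ → ℝ) : Prop :=
  ContDiff ℝ (⊤ : ℕ∞) (fun p : ℝ × ℝ × ℝ × ℝ => f p.1 p.2.1 p.2.2.1 p.2.2.2)

/-- The uncurried form of `f`. -/
def unc (f : ℝ → ℝ → ℝ → ℝ → ℝ) (p : ℝ × ℝ × ℝ × ℝ) : ℝ := f p.1 p.2.1 p.2.2.1 p.2.2.2

lemma Smooth4.contDiff {f : ℝ → ℝ → ℝ → ℝ → ℝ} (hf : Smooth4 f) :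
    ContDiff ℝ (⊤ : ℕ∞) (unc f) := hf

lemma Smooth4.differentiable {f : ℝ → ℝ → ℝ → ℝ → ℝ} (hf : Smooth4 f) :
    Differentiable ℝ (unc f) := hf.contDiff.differentiable (by simp)

lemma Smooth4.pds_eq {f : ℝ → ℝ → ℝ → ℝ → ℝ} (hf : Smooth4 f) (u s v t : ℝ) :
    pds f u s v t = fderiv ℝ (unc f) (u, s, v, t) (0, 1, 0, 0) := by
  have h1 : HasDerivAt (fun z : ℝ => ((u, z, v, t) : ℝ × ℝ × ℝ × ℝ)) (0, 1, 0, 0) s :=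
    (hasDerivAt_const s u).prodMk ((hasDerivAt_id s).prodMk
      ((hasDerivAt_const s v).prodMk (hasDerivAt_const s t)))
  exact ((hf.differentiable (u, s, v, t)).hasFDerivAt.comp_hasDerivAt s h1).deriv

lemma Smooth4.pdt_eq {f : ℝ → ℝ → ℝ → ℝ → ℝ} (hf : Smooth4 f) (u s v t : ℝ) :
    pdt f u s v t = fderiv ℝ (unc f) (u, s, v, t) (0, 0, 0, 1) := by
  have h1 : HasDerivAt (fun z : ℝ => ((u, s, v, z) : ℝ × ℝ × ℝ × ℝ)) (0, 0, 0, 1) t :=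
    (hasDerivAt_const t u).prodMk ((hasDerivAt_const t s).prodMk
      ((hasDerivAt_const t v).prodMk (hasDerivAt_id t)))
  exact ((hf.differentiable (u, s, v, t)).hasFDerivAt.comp_hasDerivAt t h1).deriv

lemma Smooth4.unc_pds {f : ℝ → ℝ → ℝ → ℝ → ℝ} (hf : Smooth4 f) :
    unc (GSSFinsler.pds f) = fun p => fderiv ℝ (unc f) p (0, 1, 0, 0) :=
  funext fun _ => hf.pds_eq _ _ _ _

lemma Smooth4.unc_pdt {f : ℝ → ℝ → ℝ → ℝ → ℝ} (hf : Smooth4 f) :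
    unc (GSSFinsler.pdt f) = fun p => fderiv ℝ (unc f) p (0, 0, 0, 1) :=
  funext fun _ => hf.pdt_eq _ _ _ _

lemma Smooth4.contDiff_fderiv {f : ℝ → ℝ → ℝ → ℝ → ℝ} (hf : Smooth4 f) :
    ContDiff ℝ (⊤ : ℕ∞) (fderiv ℝ (unc f)) :=
  hf.contDiff.fderiv_right (by simp)

lemma Smooth4.pds {f : ℝ → ℝ → ℝ → ℝ → ℝ} (hf : Smooth4 f) : Smooth4 (pds f) := by
  change ContDiff ℝ (⊤ : ℕ∞) (unc (GSSFinsler.pds f))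
  rw [hf.unc_pds]
  exact hf.contDiff_fderiv.clm_apply contDiff_const

lemma Smooth4.pdt {f : ℝ → ℝ → ℝ → ℝ → ℝ} (hf : Smooth4 f) : Smooth4 (pdt f) := by
  change ContDiff ℝ (⊤ : ℕ∞) (unc (GSSFinsler.pdt f))
  rw [hf.unc_pdt]
  exact hf.contDiff_fderiv.clm_apply contDiff_const

lemma fderiv_fderiv_apply {f : ℝ → ℝ → ℝ → ℝ → ℝ} (hf : Smooth4 f) (p v w : ℝ × ℝ × ℝ × ℝ) :
    fderiv ℝ (fun q => fderiv ℝ (unc f) q v) p w = fderiv ℝ (fderiv ℝ (unc f)) p w v := by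
  have h := (hf.contDiff_fderiv.differentiable (by simp) p).hasFDerivAt.clm_apply
    (hasFDerivAt_const v p)
  rw [h.fderiv]
  simp

/-- Mixed partial derivatives in `s` and `t` commute. -/
lemma Smooth4.pds_pdt {f : ℝ → ℝ → ℝ → ℝ → ℝ} (hf : Smooth4 f) (u s v t : ℝ) :
    GSSFinsler.pds (GSSFinsler.pdt f) u s v t = GSSFinsler.pdt (GSSFinsler.pds f) u s v t := by
  rw [hf.pdt.pds_eq, hf.pds.pdt_eq, hf.unc_pds, hf.unc_pdt, fderiv_fderiv_apply hf,
    fderiv_fderiv_apply hf]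
  exact (hf.contDiff.contDiffAt.isSymmSndFDerivAt (by
    simpa using WithTop.coe_le_coe.mpr (le_top : (2 : ℕ∞) ≤ ⊤))).eq _ _

/-- The chain rule when only the second and fourth arguments vary. -/
lemma Smooth4.fderiv_apply {f : ℝ → ℝ → ℝ → ℝ → ℝ} (hf : Smooth4 f) (u s v t b d : ℝ) :
    fderiv ℝ (unc f) (u, s, v, t) (0, b, 0, d) =
      GSSFinsler.pds f u s v t * b + GSSFinsler.pdt f u s v t * d := by
  have h : ((0, b, 0, d) : ℝ × ℝ × ℝ × ℝ) = b • (0, 1, 0, 0) + d • (0, 0, 0, 1) := by simp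
  rw [h, map_add, map_smul, map_smul, hf.pds_eq, hf.pdt_eq, smul_eq_mul, smul_eq_mul]
  ring

/-! ### Partial derivatives in the coordinates of `y` -/

/-- `g` is Fréchet differentiable at `z` and its `i`-th partial derivative there is `d`. -/
def HasPD {n : ℕ} (g : (Fin n → ℝ) → ℝ) (z : Fin n → ℝ) (i : Fin n) (d : ℝ) : Prop :=
  ∃ g' : (Fin n → ℝ) →L[ℝ] ℝ, HasFDerivAt g g' z ∧ g' (bvec n i) = d

variable {n : ℕ} {g k : (Fin n → ℝ) → ℝ} {z : Fin n → ℝ} {i : Fin n} {d e : ℝ}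

lemma HasPD.fderiv (h : HasPD g z i d) : fderiv ℝ g z (bvec n i) = d := by
  obtain ⟨g', h1, h2⟩ := h
  rw [h1.fderiv, h2]

lemma HasPD.of_eq (h : HasPD g z i d) (hd : d = e) : HasPD g z i e := hd ▸ h

lemma hasPD_const (c : ℝ) : HasPD (fun _ => c) z i 0 :=
  ⟨0, hasFDerivAt_const c z, rfl⟩

lemma HasPD.add (hg : HasPD g z i d) (hk : HasPD k z i e) :
    HasPD (fun w => g w + k w) z i (d + e) := by
  obtain ⟨g', h1, rfl⟩ := hg
  obtain ⟨k', h2, rfl⟩ := hk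
  exact ⟨_, h1.add h2, rfl⟩

lemma HasPD.sub (hg : HasPD g z i d) (hk : HasPD k z i e) :
    HasPD (fun w => g w - k w) z i (d - e) := by
  obtain ⟨g', h1, rfl⟩ := hg
  obtain ⟨k', h2, rfl⟩ := hk
  exact ⟨_, h1.sub h2, rfl⟩

lemma HasPD.mul (hg : HasPD g z i d) (hk : HasPD k z i e) :
    HasPD (fun w => g w * k w) z i (g z * e + k z * d) := by
  obtain ⟨g', h1, rfl⟩ := hg
  obtain ⟨k', h2, rfl⟩ := hk
  exact ⟨_, h1.mul h2, rfl⟩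

lemma HasPD.div (hg : HasPD g z i d) (hk : HasPD k z i e) (h0 : k z ≠ 0) :
    HasPD (fun w => g w / k w) z i ((k z * d - g z * e) / k z ^ 2) := by
  obtain ⟨g', h1, rfl⟩ := hg
  obtain ⟨k', h2, rfl⟩ := hk
  have h3 := (hasDerivAt_inv h0).comp_hasFDerivAt z h2
  refine ⟨_, h1.mul h3, ?_⟩
  simp
  field_simp
  ring

lemma hasPD_coord (j : Fin n) : HasPD (fun w => w j) z i (if i = j then 1 else 0) := by
  refine ⟨ContinuousLinearMap.proj j, hasFDerivAt_apply j z, ?_⟩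
  simp [bvec, Pi.single_apply, eq_comm]

lemma hasPD_sum {f : Fin n → (Fin n → ℝ) → ℝ} {d : Fin n → ℝ}
    (h : ∀ l, HasPD (f l) z i (d l)) : HasPD (fun w => ∑ l, f l w) z i (∑ l, d l) := by
  choose f' h1 h2 using h
  refine ⟨∑ l, f' l, HasFDerivAt.fun_sum fun l _ => h1 l, ?_⟩
  simp [h2]

lemma hasPD_ip_right (x : Fin n → ℝ) : HasPD (fun w => ip x w) z i (x i) := by
  have h := hasPD_sum fun l => (hasPD_const (z := z) (i := i) (x l)).mul (hasPD_coord l)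
  simpa [ip] using h

lemma hasPD_ip_self : HasPD (fun w => ip w w) z i (2 * z i) := by
  have h := hasPD_sum fun l => (hasPD_coord (z := z) (i := i) l).mul (hasPD_coord l)
  simpa [ip, Finset.sum_add_distrib, two_mul] using h

lemma ip_self_pos (hz : z ≠ 0) : 0 < ip z z := by
  obtain ⟨l, hl⟩ := Function.ne_iff.mp hz
  exact Finset.sum_pos' (fun l _ => mul_self_nonneg (z l))
    ⟨l, Finset.mem_univ l, mul_self_pos.mpr hl⟩

lemma nrm_pos (hz : z ≠ 0) : 0 < nrm z := Real.sqrt_pos.mpr (ip_self_pos hz)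

lemma hasPD_nrm (hz : z ≠ 0) : HasPD (fun w => nrm w) z i (z i / nrm z) := by
  obtain ⟨g', h1, h2⟩ := hasPD_ip_self (z := z) (i := i)
  refine ⟨_, h1.sqrt (ip_self_pos hz).ne', ?_⟩
  have := nrm_pos hz
  simp only [nrm] at this ⊢
  simp [h2]
  field_simp

/-- `∂r_j/∂y^i = (δ_{ij} - r_i r_j) / r`. -/
lemma hasPD_unit (hz : z ≠ 0) (j : Fin n) :
    HasPD (fun w => w j / nrm w) z i
      (((if i = j then 1 else 0) - z i / nrm z * (z j / nrm z)) /
        nrm z) := by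
  have h0 := (nrm_pos hz).ne'
  refine HasPD.of_eq ((hasPD_coord j).div (hasPD_nrm hz) h0) ?_
  field_simp

/-- `∂s/∂y^i = s_i / r`; the same formula with `a` for `x` gives `∂t/∂y^i = t_i / r`. -/
lemma hasPD_sc (hz : z ≠ 0) (x : Fin n → ℝ) :
    HasPD (fun w => sc x w) z i (sv x z i / nrm z) := by
  have h0 := (nrm_pos hz).ne'
  refine HasPD.of_eq ((hasPD_ip_right x).div (hasPD_nrm hz) h0) ?_
  simp only [sv, sc]
  field_simp

lemma hasPD_tc (hz : z ≠ 0) (a : Fin n → ℝ) :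
    HasPD (fun w => tc a w) z i (tv a z i / nrm z) := hasPD_sc hz a

lemma hasPD_sv (hz : z ≠ 0) (x : Fin n → ℝ) (j : Fin n) :
    HasPD (fun w => sv x w j) z i
      (-(sc x z * ((if i = j then 1 else 0) -
          z i / nrm z * (z j / nrm z)) +
        z j / nrm z * sv x z i) / nrm z) := by
  refine HasPD.of_eq ((hasPD_const (x j)).sub ((hasPD_sc hz x).mul (hasPD_unit hz j))) ?_
  ring

lemma hasPD_tv (hz : z ≠ 0) (a : Fin n → ℝ) (j : Fin n) :
    HasPD (fun w => tv a w j) z i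
      (-(tc a z * ((if i = j then 1 else 0) -
          z i / nrm z * (z j / nrm z)) +
        z j / nrm z * tv a z i) / nrm z) := hasPD_sv hz a j

lemma hasPD_ev {f : ℝ → ℝ → ℝ → ℝ → ℝ} (hf : Smooth4 f) (hz : z ≠ 0) (a x : Fin n → ℝ) :
    HasPD (fun w => ev f a x w) z i
      ((ev (pds f) a x z * sv x z i +
        ev (pdt f) a x z * tv a z i) / nrm z) := by
  obtain ⟨S, hS, hS'⟩ := hasPD_sc (i := i) hz x
  obtain ⟨T, hT, hT'⟩ := hasPD_tc (i := i) hz a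
  have h1 := (hasFDerivAt_const (𝕜 := ℝ) (uu x) z).prodMk (hS.prodMk
    ((hasFDerivAt_const (𝕜 := ℝ) (vc a x) z).prodMk hT))
  have h3 := HasFDerivAt.comp z
    (hf.differentiable (uu x, sc x z, vc a x, tc a z)).hasFDerivAt h1
  refine ⟨_, h3, ?_⟩
  have h2 := hf.fderiv_apply (uu x) (sc x z) (vc a x) (tc a z)
    (S (bvec n i)) (T (bvec n i))
  refine Eq.trans h2 ?_
  rw [hS', hT']
  simp only [ev]
  ring

/-- The explicit expression `φ r_j + φ_s s_j + φ_t t_j` for `∂F/∂y^j`. -/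
def dF (φ : ℝ → ℝ → ℝ → ℝ → ℝ) (a x : Fin n → ℝ) (j : Fin n) (y : Fin n → ℝ) : ℝ :=
  ev φ a x y * (y j / nrm y) + ev (pds φ) a x y * sv x y j + ev (pdt φ) a x y * tv a y j

lemma hasPD_Fm {φ : ℝ → ℝ → ℝ → ℝ → ℝ} (hφ : Smooth4 φ) (hz : z ≠ 0) (a x : Fin n → ℝ) :
    HasPD (fun w => Fm φ a x w) z i (dF φ a x i z) := by
  have h0 := (nrm_pos hz).ne'
  change HasPD (fun w => nrm w * ev φ a x w) z i _
  refine HasPD.of_eq ((hasPD_nrm hz).mul (hasPD_ev hφ hz a x)) ?_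
  simp only [dF]
  field_simp
  ring

end GSSFinsler

open GSSFinsler in
/-- The explicit formula for the angular metric of a general
spherically symmetric metric. -/
theorem angular_metric_general_spherically_symmetric
    {n : ℕ} (φ : ℝ → ℝ → ℝ → ℝ → ℝ)
    (hφ : ContDiff ℝ (⊤ : ℕ∞) (fun p : ℝ × ℝ × ℝ × ℝ => φ p.1 p.2.1 p.2.2.1 p.2.2.2))
    (a x y : Fin n → ℝ) (hy : y ≠ 0) :
    ∀ i j : Fin n,
      ang φ a x y i j =
        ev (sig1 φ) a x y * ev φ a x y *
            ((if i = j then (1 : ℝ) else 0) - (y i / nrm y) * (y j / nrm y)) +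
        ev φ a x y * ev (pds (pds φ)) a x y * (sv x y i * sv x y j) +
        ev φ a x y * ev (pdt (pdt φ)) a x y * (tv a y i * tv a y j) +
        ev φ a x y * ev (pdt (pds φ)) a x y *
          (sv x y i * tv a y j + sv x y j * tv a y i) := by
  intro i j
  have h0 := (nrm_pos hy).ne'
  have hS : Smooth4 φ := hφ
  -- The formula for `∂(F²)/∂y^j` is needed near `y`, where `z ≠ 0`, to be differentiated again.
  have hev : (fun z => fderiv ℝ (fun w => (Fm φ a x w) ^ 2) z (bvec n j)) =ᶠ[nhds y]
      fun z => 2 * (Fm φ a x z * dF φ a x j z) := by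
    filter_upwards [isOpen_ne.mem_nhds hy] with z hz
    have h := ((hasPD_Fm (i := j) hS hz a x).mul (hasPD_Fm hS hz a x)).fderiv
    simp only [← pow_two] at h
    rw [h]
    ring
  have hdF := (((hasPD_ev (i := i) hS hy a x).mul (hasPD_unit hy j)).add
    ((hasPD_ev hS.pds hy a x).mul (hasPD_sv hy x j))).add
    ((hasPD_ev hS.pdt hy a x).mul (hasPD_tv hy a j))
  have h2 := ((hasPD_const 2).mul ((hasPD_Fm hS hy a x).mul hdF)).fderiv
  have hsym : ev (pds (pdt φ)) a x y = ev (pdt (pds φ)) a x y := hS.pds_pdt _ _ _ _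
  have hF : Fm φ a x y = nrm y * ev φ a x y := rfl
  have hσ : ev (sig1 φ) a x y =
      ev φ a x y - sc x y * ev (pds φ) a x y - tc a y * ev (pdt φ) a x y := rfl
  rw [ang, gm, hev.fderiv_eq, (hasPD_Fm hS hy a x).fderiv, (hasPD_Fm hS hy a x).fderiv]
  simp only [dF] at h2 ⊢
  rw [h2, hsym, hF, hσ]
  -- `δ_{ij}`, `s_i`, `t_i`, `r` and the values of `φ` and its derivatives are now independent atoms.
  generalize (if i = j then (1 : ℝ) else 0) = δ
  field_simp
  ring
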